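/- Let q ∈ ℂ with |q| ≥ 6, and let ρ > 0 and σ > 0 satisfy ρ² + σ² ≤ |q|². For each integer j ≥ 2 let c_j : ℂ → ℂ satisfy |c_j(w)| ≤ 2^{j−1} |q|^{(j−1)|w|} for all w ∈ ℂ with |w| ≤ |q|. Let y, h : ℂ → ℂ both satisfy |y(w)| ≤ 1/|q| and |h(w)| ≤ 1/|q| for all w ∈ D(ρ,σ), together with y(z/q) = y(z)/|q| and h(z/q) = h(z)/|q| for all z ∈ D(ρ,σ). Define T[y](z) = ∑_{j=2}^{∞} c_j(z/q) y(z/q)^j and similarly T[h](z). Then for every z ∈ D(ρ,σ), one has |T[y](z) − T[h](z)| ≤ (1/4) · sup_{w ∈ D(ρ,σ)} |y(w) − h(w)|. -/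

import Mathlib

/-!
Write `Q = ‖q‖ ≥ 6`. For `z ∈ D(ρ,σ)` the hypothesis `ρ² + σ² ≤ Q²` gives `‖z/q‖ ≤ 1`, so
`‖c_j(z/q)‖ ≤ (2Q)^(j-1)`. The scaling relation gives `‖y(z/q)‖, ‖h(z/q)‖ ≤ 1/Q²` and
`‖y(z/q) - h(z/q)‖ = ‖y(z) - h(z)‖/Q ≤ S/Q`, where `S` is the supremum. Since
`‖a^j - b^j‖ ≤ j B^(j-1) ‖a - b‖` for `‖a‖, ‖b‖ ≤ B`, the `j`-th term of the difference is at most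
`j (2/Q)^(j-1) S/Q ≤ j (1/3)^(j-1) S/6`. As `∑_{j≥2} j (1/3)^(j-1) = 5/4`, the total is at most
`(5/24) S ≤ S/4`.
-/

lemma norm_pow_succ_sub_pow_succ_le {a b : ℂ} {B : ℝ} (ha : ‖a‖ ≤ B) (hb : ‖b‖ ≤ B) (n : ℕ) :
    ‖a ^ (n + 1) - b ^ (n + 1)‖ ≤ (n + 1) * B ^ n * ‖a - b‖ := by
  have hB : 0 ≤ B := (norm_nonneg a).trans ha
  induction n with
  | zero => simp
  | succ n ih =>
    have e : a ^ (n + 1 + 1) - b ^ (n + 1 + 1)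
        = a * (a ^ (n + 1) - b ^ (n + 1)) + (a - b) * b ^ (n + 1) := by ring
    have h1 : ‖a * (a ^ (n + 1) - b ^ (n + 1))‖ ≤ B * ((n + 1) * B ^ n * ‖a - b‖) := by
      rw [norm_mul]
      exact mul_le_mul ha ih (norm_nonneg _) hB
    have h2 : ‖(a - b) * b ^ (n + 1)‖ ≤ ‖a - b‖ * B ^ (n + 1) := by
      rw [norm_mul, norm_pow]
      gcongr
    rw [e]
    refine (norm_add_le _ _).trans ((add_le_add h1 h2).trans (le_of_eq ?_))
    push_cast
    ring

/-- The series `∑_{j≥2} j (1/3)^(j-1)`, indexed by `j = n + 2`. -/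
lemma hasSum_majorant : HasSum (fun n : ℕ => ((n : ℝ) + 2) * (1 / 3) ^ (n + 1)) (5 / 4) := by
  have h1 := hasSum_coe_mul_geometric_of_norm_lt_one (𝕜 := ℝ) (r := 1 / 3) (by norm_num)
  have h2 := hasSum_geometric_of_lt_one (r := (1 / 3 : ℝ)) (by norm_num) (by norm_num)
  have h3 := (h1.mul_left (1 / 3)).add (h2.mul_left (2 / 3))
  have hval : (1 / 3 : ℝ) * (1 / 3 / (1 - 1 / 3) ^ 2) + 2 / 3 * (1 - 1 / 3)⁻¹ = 5 / 4 := by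
    norm_num
  rw [hval] at h3
  have hfun : (fun n : ℕ => ((n : ℝ) + 2) * (1 / 3) ^ (n + 1)) =
      fun n : ℕ => 1 / 3 * ((n : ℝ) * (1 / 3) ^ n) + 2 / 3 * (1 / 3) ^ n := by
    funext n
    ring
  rw [hfun]
  exact h3

/-- With `|q| ≥ 6`, `ρ² + σ² ≤ |q|²`, and
`|c_j(w)| ≤ 2^{j-1} |q|^{(j-1)|w|}` for `|w| ≤ |q|`, the operator
`T[y](z) = ∑_{j≥2} c_j(z/q) y(z/q)^j` is a contraction with ratio `1/4` on
`D(ρ,σ)` with respect to the sup-metric. -/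
theorem stmt19 (q : ℂ) (hq : 6 ≤ ‖q‖) (ρ σ : ℝ) (hρ : 0 < ρ) (hσ : 0 < σ)
    (hρσ : ρ ^ 2 + σ ^ 2 ≤ ‖q‖ ^ 2)
    (c : ℕ → ℂ → ℂ)
    (hc : ∀ j : ℕ, 2 ≤ j → ∀ w : ℂ, ‖w‖ ≤ ‖q‖ →
      ‖c j w‖ ≤ 2 ^ (j - 1) * ‖q‖ ^ (((j : ℝ) - 1) * ‖w‖))
    (y h : ℂ → ℂ)
    (hybd : ∀ w : ℂ, |w.re| ≤ ρ → |w.im| ≤ σ → ‖y w‖ ≤ 1 / ‖q‖)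
    (hhbd : ∀ w : ℂ, |w.re| ≤ ρ → |w.im| ≤ σ → ‖h w‖ ≤ 1 / ‖q‖)
    (hyscale : ∀ z : ℂ, |z.re| ≤ ρ → |z.im| ≤ σ → y (z / q) = y z / (‖q‖ : ℂ))
    (hhscale : ∀ z : ℂ, |z.re| ≤ ρ → |z.im| ≤ σ → h (z / q) = h z / (‖q‖ : ℂ)) :
    ∀ z : ℂ, |z.re| ≤ ρ → |z.im| ≤ σ →
      ‖(∑' n : ℕ, c (n + 2) (z / q) * y (z / q) ^ (n + 2)) -
        (∑' n : ℕ, c (n + 2) (z / q) * h (z / q) ^ (n + 2))‖ ≤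
        (1 / 4) * ⨆ w : {w : ℂ // |w.re| ≤ ρ ∧ |w.im| ≤ σ}, ‖y w.1 - h w.1‖ := by
  intro z hzr hzi
  have hQ : 0 < ‖q‖ := by linarith
  have hz : ‖z‖ ≤ ‖q‖ := by
    have h1 : ‖z‖ ^ 2 ≤ ‖q‖ ^ 2 := by
      rw [Complex.sq_norm, Complex.normSq_apply]
      have hr := sq_le_sq' (neg_le_of_abs_le hzr) (le_of_abs_le hzr)
      have hi := sq_le_sq' (neg_le_of_abs_le hzi) (le_of_abs_le hzi)
      nlinarith
    exact le_of_sq_le_sq h1 hQ.le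
  have hw : ‖z / q‖ ≤ 1 := by
    rw [norm_div]
    exact (div_le_one hQ).2 hz
  have hcb : ∀ n : ℕ, ‖c (n + 2) (z / q)‖ ≤ (2 * ‖q‖) ^ (n + 1) := by
    intro n
    refine (hc (n + 2) (by omega) (z / q) (by linarith)).trans ?_
    have h1 : ‖q‖ ^ ((((n + 2 : ℕ) : ℝ) - 1) * ‖z / q‖) ≤ ‖q‖ ^ (n + 1) := by
      rw [← Real.rpow_natCast ‖q‖ (n + 1)]
      refine Real.rpow_le_rpow_of_exponent_le (by linarith) ?_
      push_cast
      nlinarith [norm_nonneg (z / q), (Nat.cast_nonneg n : (0 : ℝ) ≤ n)]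
    rw [mul_pow, show n + 2 - 1 = n + 1 by omega]
    gcongr
  set S := ⨆ w : {w : ℂ // |w.re| ≤ ρ ∧ |w.im| ≤ σ}, ‖y w.1 - h w.1‖ with hS
  have hzS : ‖y z - h z‖ ≤ S := by
    have hbdd : BddAbove (Set.range fun w : {w : ℂ // |w.re| ≤ ρ ∧ |w.im| ≤ σ} =>
        ‖y w.1 - h w.1‖) := by
      refine ⟨1 / ‖q‖ + 1 / ‖q‖, ?_⟩
      rintro _ ⟨w, rfl⟩
      exact (norm_sub_le _ _).trans
        (add_le_add (hybd w.1 w.2.1 w.2.2) (hhbd w.1 w.2.1 w.2.2))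
    exact le_ciSup hbdd ⟨z, hzr, hzi⟩
  have hS0 : 0 ≤ S := (norm_nonneg _).trans hzS
  have hsmall : ∀ f : ℂ → ℂ, ‖f z‖ ≤ 1 / ‖q‖ → f (z / q) = f z / (‖q‖ : ℂ) →
      ‖f (z / q)‖ ≤ 1 / ‖q‖ ^ 2 := by
    intro f hf hs
    rw [hs, norm_div, Complex.norm_real, norm_norm, div_le_iff₀ hQ]
    refine hf.trans (le_of_eq ?_)
    field_simp
  have hya := hsmall y (hybd z hzr hzi) (hyscale z hzr hzi)
  have hha := hsmall h (hhbd z hzr hzi) (hhscale z hzr hzi)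
  have hdiff : ‖y (z / q) - h (z / q)‖ ≤ S / 6 := by
    rw [hyscale z hzr hzi, hhscale z hzr hzi, ← sub_div, norm_div, Complex.norm_real, norm_norm]
    gcongr
  have hratio : ∀ n : ℕ, (2 * ‖q‖) ^ (n + 1) * (1 / ‖q‖ ^ 2) ^ (n + 1) ≤ (1 / 3) ^ (n + 1) := by
    intro n
    rw [← mul_pow]
    have : 2 * ‖q‖ * (1 / ‖q‖ ^ 2) ≤ 1 / 3 := by
      rw [mul_one_div, div_le_iff₀ (by positivity)]
      nlinarith
    gcongr
  -- Both series converge, so that the difference of the sums is the sum of the differences.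
  have hsum : ∀ a : ℂ, ‖a‖ ≤ 1 / ‖q‖ ^ 2 →
      Summable fun n : ℕ => c (n + 2) (z / q) * a ^ (n + 2) := by
    intro a ha
    have ha1 : ‖a‖ ≤ 1 := ha.trans ((div_le_one (by positivity)).2 (by nlinarith))
    refine Summable.of_norm_bounded hasSum_majorant.summable fun n => ?_
    calc ‖c (n + 2) (z / q) * a ^ (n + 2)‖
        = ‖c (n + 2) (z / q)‖ * ‖a‖ ^ (n + 1) * ‖a‖ := by
          rw [norm_mul, norm_pow, pow_succ _ (n + 1), mul_assoc]
      _ ≤ (2 * ‖q‖) ^ (n + 1) * (1 / ‖q‖ ^ 2) ^ (n + 1) * 1 := by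
          gcongr
          exact hcb n
      _ ≤ 1 * (1 / 3) ^ (n + 1) := by
          rw [mul_one, one_mul]
          exact hratio n
      _ ≤ ((n : ℝ) + 2) * (1 / 3) ^ (n + 1) := by
          gcongr
          linarith [(Nat.cast_nonneg n : (0 : ℝ) ≤ n)]
  rw [← (hsum _ hya).tsum_sub (hsum _ hha)]
  refine (tsum_of_norm_bounded (hasSum_majorant.mul_right (S / 6)) fun n => ?_).trans
    (by linarith)
  have hp := norm_pow_succ_sub_pow_succ_le hya hha (n + 1)
  calc ‖c (n + 2) (z / q) * y (z / q) ^ (n + 2) - c (n + 2) (z / q) * h (z / q) ^ (n + 2)‖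
      = ‖c (n + 2) (z / q)‖ * ‖y (z / q) ^ (n + 2) - h (z / q) ^ (n + 2)‖ := by
        rw [← mul_sub, norm_mul]
    _ ≤ (2 * ‖q‖) ^ (n + 1) *
        ((((n + 1 : ℕ) : ℝ) + 1) * (1 / ‖q‖ ^ 2) ^ (n + 1) * ‖y (z / q) - h (z / q)‖) :=
        mul_le_mul (hcb n) hp (norm_nonneg _) (by positivity)
    _ = ((n : ℝ) + 2) * ((2 * ‖q‖) ^ (n + 1) * (1 / ‖q‖ ^ 2) ^ (n + 1)) *
        ‖y (z / q) - h (z / q)‖ := by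
        push_cast
        ring
    _ ≤ ((n : ℝ) + 2) * (1 / 3) ^ (n + 1) * (S / 6) := by
        gcongr
        exact hratio n
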